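/- Assume the kinetic setting below, with H C², b a bounded C¹ solution of b_t + H_x b_ρ − H_ρ b_x = H_{ρρ}b² + 2H_{ρx}b + H_{xx}, and f a C¹ solution of the kinetic equation f_t − (vf)_x − C⁺f − C⁻f = Q⁺(f) − Q⁻(f). Let φ be the flow of dρ/dz = b(z,t,ρ) and Γ(x,y,t,ρ) := ∫_x^y λ(z,t,φ_x^z(ρ;t))dz. Then Γ_t(x,y,t,ρ) + β(x,t,ρ)Γ_ρ(x,y,t,ρ) = A(y,t,φ_x^y(ρ;t)) − A(x,t,ρ) for all x ≤ y, t, ρ. -/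

import Mathlib

open MeasureTheory Set

/-- The Rankine–Hugoniot velocity `v(x,t,ρ₋,ρ₊) = (H(x,t,ρ₋)−H(x,t,ρ₊))/(ρ₋−ρ₊)`,
extended by `H_ρ` on the diagonal. -/
noncomputable def vel (H : ℝ → ℝ → ℝ → ℝ) (x t a c : ℝ) : ℝ :=
  if a = c then deriv (fun r => H x t r) a else (H x t a - H x t c) / (a - c)

/-- The zeroth moment `λ(x,t,ρ) = ∫_ρ^∞ f(x,t,ρ,ρ₊) dρ₊`. -/
noncomputable def lamF (f : ℝ → ℝ → ℝ → ℝ → ℝ) (x t ρ : ℝ) : ℝ :=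
  ∫ rp in Ioi ρ, f x t ρ rp

/-- The flux moment `A(x,t,ρ) = ∫_ρ^∞ v(x,t,ρ,ρ₊) f(x,t,ρ,ρ₊) dρ₊`. -/
noncomputable def AF (H : ℝ → ℝ → ℝ → ℝ) (f : ℝ → ℝ → ℝ → ℝ → ℝ) (x t ρ : ℝ) : ℝ :=
  ∫ rp in Ioi ρ, vel H x t ρ rp * f x t ρ rp

/-- `β = H_x + b·H_ρ`. -/
noncomputable def betaF (H b : ℝ → ℝ → ℝ → ℝ) (x t ρ : ℝ) : ℝ :=
  deriv (fun a => H a t ρ) x + b x t ρ * deriv (fun r => H x t r) ρ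

/-- `K(x,t,ρ₊,ρ₋) = b(x,t,ρ₊)v(x,t,ρ₋,ρ₊) − β(x,t,ρ₊)`. -/
noncomputable def KF (H b : ℝ → ℝ → ℝ → ℝ) (x t rp rm : ℝ) : ℝ :=
  b x t rp * vel H x t rm rp - betaF H b x t rp

/-- The coagulation gain term `Q⁺(f)`. -/
noncomputable def QplusF (H : ℝ → ℝ → ℝ → ℝ) (f : ℝ → ℝ → ℝ → ℝ → ℝ)
    (x t rm rp : ℝ) : ℝ :=
  ∫ rs in Ioo rm rp, (vel H x t rs rp - vel H x t rm rs) * f x t rm rs * f x t rs rp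

/-- The loss kernel `Jf`. -/
noncomputable def JF (H : ℝ → ℝ → ℝ → ℝ) (f : ℝ → ℝ → ℝ → ℝ → ℝ)
    (x t rm rp : ℝ) : ℝ :=
  AF H f x t rp - AF H f x t rm - vel H x t rm rp * (lamF f x t rp - lamF f x t rm)

/-- The boundary-drift operator `C⁺f = ∂_{ρ₊}[K(x,t,ρ₊,ρ₋) f(x,t,ρ₋,ρ₊)]`. -/
noncomputable def CplusF (H b : ℝ → ℝ → ℝ → ℝ) (f : ℝ → ℝ → ℝ → ℝ → ℝ)
    (x t rm rp : ℝ) : ℝ :=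
  deriv (fun r => KF H b x t r rm * f x t rm r) rp

/-- The boundary-drift operator `C⁻f = b ∂_{ρ₋}(vf) − β ∂_{ρ₋}f`. -/
noncomputable def CminusF (H b : ℝ → ℝ → ℝ → ℝ) (f : ℝ → ℝ → ℝ → ℝ → ℝ)
    (x t rm rp : ℝ) : ℝ :=
  b x t rm * deriv (fun r => vel H x t r rp * f x t r rp) rm
    - betaF H b x t rm * deriv (fun r => f x t r rp) rm

/-- `f` solves the kinetic equation `f_t − (vf)_x − C⁺f − C⁻f = Q⁺(f) − f·Jf`. -/
def SolvesKineticF (H b : ℝ → ℝ → ℝ → ℝ) (f : ℝ → ℝ → ℝ → ℝ → ℝ) : Prop :=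
  ∀ x t rm rp : ℝ,
    deriv (fun s => f x s rm rp) t - deriv (fun z => vel H z t rm rp * f z t rm rp) x
        - CplusF H b f x t rm rp - CminusF H b f x t rm rp
      = QplusF H f x t rm rp - f x t rm rp * JF H f x t rm rp

/-- `Γ(x,y,t,ρ) = ∫_x^y λ(z,t,φ_x^z(ρ;t)) dz`. -/
noncomputable def GammaK (f : ℝ → ℝ → ℝ → ℝ → ℝ) (φ : ℝ → ℝ → ℝ → ℝ → ℝ)
    (x y t ρ : ℝ) : ℝ :=
  ∫ z in x..y, lamF f z t (φ x z ρ t)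

/-!
The equation for the slope `b` says exactly that the vector fields `∂_t + β ∂_ρ` and `∂_x + b ∂_ρ`
commute, i.e. `b_t + β b_ρ = β_x + b β_ρ`. Hence both sides of
`∂_t φ_x^z(ρ; t) + β(x, t, ρ) ∂_ρ φ_x^z(ρ; t) = β(z, t, φ_x^z(ρ; t))` solve the same linear
equation in `z` with the same value at `z = x`. On the other hand, integrating the kinetic equation
in `ρ₊` cancels `Q⁺` against `Q⁻` by Fubini's theorem and removes `C⁺`, because `f` vanishes at the
ends of the range of `ρ₊`; what remains is `λ_t + β λ_ρ = A_x + b A_ρ`. Combining the two, the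
derivative of `λ(z, t, φ_x^z(ρ; t))` along `∂_t + β(x, t, ρ) ∂_ρ` is the total `z`-derivative of
`A(z, t, φ_x^z(ρ; t))`, which is then integrated over `[x, y]`.
-/

section Calculus

variable {X E : Type*} [NormedAddCommGroup X] [NormedSpace ℝ X]
  [NormedAddCommGroup E] [NormedSpace ℝ E]

theorem contDiff_deriv_param {m n : WithTop ℕ∞} {F : X → ℝ → E} {g : X → ℝ}
    (hF : ContDiff ℝ m ↿F) (hg : ContDiff ℝ n g) (hnm : n + 1 ≤ m) :
    ContDiff ℝ n fun p => deriv (F p) (g p) :=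
  (ContDiff.fderiv hF hg hnm).clm_apply contDiff_const

theorem continuous_deriv_param {F : X → ℝ → E} {g : X → ℝ}
    (hF : ContDiff ℝ 1 ↿F) (hg : Continuous g) : Continuous fun p => deriv (F p) (g p) :=
  (contDiff_deriv_param hF (contDiff_zero.2 hg) (by norm_num)).continuous

theorem continuous_fderiv_fst {F : X → ℝ → E} (hF : ContDiff ℝ 1 ↿F) :
    Continuous fun q : X × ℝ => fderiv ℝ (fun p => F p q.2) q.1 := by
  have hswap : ContDiff ℝ 1 (Function.uncurry fun (q : X × ℝ) p => F p q.2) :=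
    hF.comp (contDiff_snd.prodMk (contDiff_snd.comp contDiff_fst))
  exact (hswap.fderiv (contDiff_fst.of_le zero_le_one) (by norm_num)).continuous

theorem hasDerivAt_comp_graph {B : ℝ → ℝ → E} {v : ℝ → ℝ} {v' s : ℝ}
    (hB : DifferentiableAt ℝ ↿B (s, v s)) (hv : HasDerivAt v v' s) :
    HasDerivAt (fun a => B a (v a))
      (deriv (fun a => B a (v s)) s + v' • deriv (B s) (v s)) s := by
  have hB' := hB.hasFDerivAt
  have h₁ : HasDerivAt (fun a => B a (v s)) (fderiv ℝ ↿B (s, v s) (1, 0)) s :=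
    HasFDerivAt.comp_hasDerivAt (l := ↿B) (f := fun a => (a, v s)) s hB'
      ((hasDerivAt_id' s).prodMk (hasDerivAt_const s (v s)))
  have h₂ : HasDerivAt (B s) (fderiv ℝ ↿B (s, v s) (0, 1)) (v s) :=
    HasFDerivAt.comp_hasDerivAt (l := ↿B) (f := fun r => (s, r)) (v s) hB'
      ((hasDerivAt_const (v s) s).prodMk (hasDerivAt_id' (v s)))
  have h : HasDerivAt (fun a => B a (v a)) (fderiv ℝ ↿B (s, v s) (1, v')) s :=
    HasFDerivAt.comp_hasDerivAt (l := ↿B) (f := fun a => (a, v a)) s hB'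
      ((hasDerivAt_id' s).prodMk hv)
  rw [h₁.deriv, h₂.deriv, ← map_smul, ← map_add]
  simpa using h

theorem hasFDerivAt_intervalIntegral_param [ProperSpace X] {F : X → ℝ → E}
    (hF : ContDiff ℝ 1 ↿F) (a b : ℝ) (p₀ : X) :
    HasFDerivAt (fun p => ∫ z in a..b, F p z)
      (∫ z in a..b, fderiv ℝ (fun p => F p z) p₀) p₀ := by
  have hF' := continuous_fderiv_fst hF
  obtain ⟨C, hC⟩ := ((isCompact_closedBall p₀ 1).prod
    (isCompact_uIcc (a := a) (b := b))).exists_bound_of_continuousOn hF'.continuousOn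
  have hF₀ (p : X) : Continuous (F p) := hF.continuous.comp (Continuous.prodMk_right p)
  refine intervalIntegral.hasFDerivAt_integral_of_dominated_of_fderiv_le
    (F' := fun p z => fderiv ℝ (fun p => F p z) p) (bound := fun _ => C)
    (Metric.closedBall_mem_nhds p₀ one_pos) ?_ ((hF₀ p₀).intervalIntegrable _ _)
    (hF'.comp (Continuous.prodMk_right p₀)).aestronglyMeasurable ?_
    intervalIntegrable_const ?_
  · exact Filter.Eventually.of_forall fun p => (hF₀ p).aestronglyMeasurable
  · exact Filter.Eventually.of_forall fun z hz p hp => hC (p, z) ⟨hp, uIoc_subset_uIcc hz⟩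
  · refine Filter.Eventually.of_forall fun z _ p _ => DifferentiableAt.hasFDerivAt ?_
    exact (hF.comp (contDiff_id.prodMk contDiff_const)).differentiable one_ne_zero p

theorem contDiff_one_intervalIntegral_param [ProperSpace X] {F : X → ℝ → E}
    (hF : ContDiff ℝ 1 ↿F) (a b : ℝ) : ContDiff ℝ 1 fun p => ∫ z in a..b, F p z := by
  have hderiv := hasFDerivAt_intervalIntegral_param hF a b
  rw [contDiff_one_iff_fderiv, funext fun p => (hderiv p).fderiv]
  exact ⟨fun p => (hderiv p).differentiableAt,
    intervalIntegral.continuous_parametric_intervalIntegral_of_continuous'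
      (continuous_fderiv_fst hF) a b⟩

theorem hasDerivAt_intervalIntegral_param [CompleteSpace E] {G : ℝ → ℝ → E}
    (hG : ContDiff ℝ 1 ↿G) (a b s : ℝ) :
    HasDerivAt (fun s => ∫ z in a..b, G s z) (∫ z in a..b, deriv (fun s => G s z) s) s := by
  have hG' : Continuous fun z => fderiv ℝ (fun s => G s z) s :=
    (continuous_fderiv_fst hG).comp (Continuous.prodMk_right s)
  convert (hasFDerivAt_intervalIntegral_param hG a b s).hasDerivAt using 1
  exact (ContinuousLinearMap.intervalIntegral_apply (hG'.intervalIntegrable _ _) 1).symm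

theorem hasDerivAt_deriv_of_hasDerivAt [CompleteSpace E] {G D : ℝ → ℝ → E}
    (hD : ContDiff ℝ 1 ↿D) (hGD : ∀ s z, HasDerivAt (G s) (D s z) z) {s₀ z₀ : ℝ}
    (hG : DifferentiableAt ℝ (fun s => G s z₀) s₀) :
    HasDerivAt (fun z => deriv (fun s => G s z) s₀) (deriv (fun s => D s z₀) s₀) z₀ := by
  have hDc (s : ℝ) : Continuous (D s) := hD.continuous.comp (Continuous.prodMk_right s)
  have hD' : Continuous fun z => deriv (fun s => D s z) s₀ :=
    continuous_deriv_param (by fun_prop) continuous_const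
  have hG_eq (s z : ℝ) : G s z = G s z₀ + ∫ w in z₀..z, D s w := by
    rw [intervalIntegral.integral_eq_sub_of_hasDerivAt (fun w _ => hGD s w)
      ((hDc s).intervalIntegrable _ _), add_sub_cancel]
  have hG_deriv (z : ℝ) : deriv (fun s => G s z) s₀
      = deriv (fun s => G s z₀) s₀ + ∫ w in z₀..z, deriv (fun s => D s w) s₀ := by
    rw [funext fun s => hG_eq s z]
    exact (hG.hasDerivAt.add (hasDerivAt_intervalIntegral_param hD z₀ z s₀)).deriv
  rw [funext hG_deriv]
  exact (intervalIntegral.integral_hasDerivAt_right (hD'.intervalIntegrable _ _)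
    (hD'.stronglyMeasurableAtFilter _ _) hD'.continuousAt).const_add _

theorem eq_of_hasDerivAt_linear {d : ℝ → ℝ} {c u v : ℝ → E} (hd : Continuous d)
    (hu : ∀ z, HasDerivAt u (c z + d z • u z) z) (hv : ∀ z, HasDerivAt v (c z + d z • v z) z)
    {x : ℝ} (hx : u x = v x) : u = v := by
  have hI (z : ℝ) : HasDerivAt (fun z => -∫ w in x..z, d w) (-d z) z :=
    (intervalIntegral.integral_hasDerivAt_right (hd.intervalIntegrable _ _)
      (hd.stronglyMeasurableAtFilter _ _) hd.continuousAt).neg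
  have hconst (z : ℝ) :
      HasDerivAt (fun z => Real.exp (-∫ w in x..z, d w) • (u z - v z)) 0 z :=
    ((hI z).exp.smul ((hu z).sub (hv z))).congr_deriv (by simp only [Pi.sub_apply]; module)
  funext z
  have h := is_const_of_deriv_eq_zero (fun z => (hconst z).differentiableAt)
    (fun z => (hconst z).deriv) z x
  rw [hx, sub_self, smul_zero] at h
  exact sub_eq_zero.1 ((smul_eq_zero.1 h).resolve_left (Real.exp_ne_zero _))

end Calculus

section Flow

/-- `φ x z ρ t` is the value at `z` of the solution of `dρ/dz = b(z, t, ρ)` starting from `ρ` at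
`z = x`; the time `t` is a parameter. The flow is also required to be jointly `C¹`. -/
structure IsCharacteristicFlow (b : ℝ → ℝ → ℝ → ℝ) (φ : ℝ → ℝ → ℝ → ℝ → ℝ) : Prop where
  initial : ∀ x ρ t, φ x x ρ t = ρ
  hasDerivAt : ∀ x z ρ t, HasDerivAt (fun w => φ x w ρ t) (b z t (φ x z ρ t)) z
  contDiff : ContDiff ℝ 1 ↿φ

/-- The balance law `L_t + β L_ρ = A_x + b A_ρ`: the derivative of `L` along `∂_t + β ∂_ρ` is the
derivative of `A` along `∂_x + b ∂_ρ`. For `L = b` and `A = β` this says that these two vector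
fields commute. -/
def CharacteristicBalance (b β L A : ℝ → ℝ → ℝ → ℝ) : Prop :=
  ∀ x t ρ,
    deriv (fun s => L x s ρ) t + β x t ρ * deriv (fun r => L x t r) ρ
      = deriv (fun z => A z t ρ) x + b x t ρ * deriv (fun r => A x t r) ρ

variable {b β L A : ℝ → ℝ → ℝ → ℝ} {φ : ℝ → ℝ → ℝ → ℝ → ℝ}

theorem CharacteristicBalance.hasDerivAt_comp (hLA : CharacteristicBalance b β L A)
    (hA : ContDiff ℝ 1 ↿A) {γ : ℝ → ℝ} {z t : ℝ} (hγ : HasDerivAt γ (b z t (γ z)) z) :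
    HasDerivAt (fun z => A z t (γ z))
      (deriv (fun s => L z s (γ z)) t + β z t (γ z) * deriv (fun r => L z t r) (γ z)) z := by
  have hAt : ContDiff ℝ 1 ↿fun z r => A z t r := by fun_prop
  rw [hLA z t (γ z)]
  exact hasDerivAt_comp_graph (hAt.differentiable one_ne_zero _) hγ

namespace IsCharacteristicFlow

theorem differentiableAt_time (hφ : IsCharacteristicFlow b φ) (x z ρ t : ℝ) :
    DifferentiableAt ℝ (fun s => φ x z ρ s) t := by
  have hφC := hφ.contDiff
  exact (by fun_prop : ContDiff ℝ 1 fun s => φ x z ρ s).differentiable one_ne_zero t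

theorem differentiableAt_initial (hφ : IsCharacteristicFlow b φ) (x z ρ t : ℝ) :
    DifferentiableAt ℝ (fun r => φ x z r t) ρ := by
  have hφC := hφ.contDiff
  exact (by fun_prop : ContDiff ℝ 1 fun r => φ x z r t).differentiable one_ne_zero ρ

theorem hasDerivAt_deriv_time (hφ : IsCharacteristicFlow b φ) (hb : ContDiff ℝ 1 ↿b)
    (x z ρ t : ℝ) :
    HasDerivAt (fun z => deriv (fun s => φ x z ρ s) t)
      (deriv (fun s => b z s (φ x z ρ t)) t
        + deriv (fun r => b z t r) (φ x z ρ t) * deriv (fun s => φ x z ρ s) t) z := by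
  have hφC := hφ.contDiff
  have hφt := hφ.differentiableAt_time x z ρ t
  have hbz : ContDiff ℝ 1 ↿fun s r => b z s r := by fun_prop
  have hD : ContDiff ℝ 1 ↿fun s z => b z s (φ x z ρ s) := by fun_prop
  refine (hasDerivAt_deriv_of_hasDerivAt hD (fun s z => hφ.hasDerivAt x z ρ s) hφt).congr_deriv ?_
  rw [(hasDerivAt_comp_graph (hbz.differentiable one_ne_zero _) hφt.hasDerivAt).deriv, smul_eq_mul,
    mul_comm]

theorem hasDerivAt_deriv_initial (hφ : IsCharacteristicFlow b φ) (hb : ContDiff ℝ 1 ↿b)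
    (x z ρ t : ℝ) :
    HasDerivAt (fun z => deriv (fun r => φ x z r t) ρ)
      (deriv (fun r => b z t r) (φ x z ρ t) * deriv (fun r => φ x z r t) ρ) z := by
  have hφC := hφ.contDiff
  have hφρ := hφ.differentiableAt_initial x z ρ t
  have hbz : ContDiff ℝ 1 fun r => b z t r := by fun_prop
  have hD : ContDiff ℝ 1 ↿fun r z => b z t (φ x z r t) := by fun_prop
  exact (hasDerivAt_deriv_of_hasDerivAt hD (fun r z => hφ.hasDerivAt x z r t) hφρ).congr_deriv
    ((hbz.differentiable one_ne_zero _).hasDerivAt.comp ρ hφρ.hasDerivAt).deriv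

/- Both sides, as functions of `z`, solve the linear equation `u' = b_t + b_ρ u` along the
characteristic, with the same value at `z = x`. -/
theorem deriv_time_add_mul_deriv_initial (hφ : IsCharacteristicFlow b φ) (hb : ContDiff ℝ 1 ↿b)
    (hβ : ContDiff ℝ 1 ↿β) (hbβ : CharacteristicBalance b β b β) (x z ρ t : ℝ) :
    deriv (fun s => φ x z ρ s) t + β x t ρ * deriv (fun r => φ x z r t) ρ
      = β z t (φ x z ρ t) := by
  have hφC := hφ.contDiff
  have hcoeff : Continuous fun z => deriv (fun r => b z t r) (φ x z ρ t) :=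
    continuous_deriv_param (by fun_prop) (by fun_prop : ContDiff ℝ 1 _).continuous
  have hvar (z : ℝ) := ((hφ.hasDerivAt_deriv_time hb x z ρ t).add
    ((hφ.hasDerivAt_deriv_initial hb x z ρ t).const_mul (β x t ρ)))
  have hβφ (z : ℝ) := hbβ.hasDerivAt_comp hβ (hφ.hasDerivAt x z ρ t)
  refine congrFun (eq_of_hasDerivAt_linear hcoeff
    (c := fun z => deriv (fun s => b z s (φ x z ρ t)) t)
    (fun z => (hvar z).congr_deriv ?_) (fun z => (hβφ z).congr_deriv ?_) (x := x) ?_) z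
  · simp only [Pi.add_apply, smul_eq_mul]
    ring
  · rw [smul_eq_mul, mul_comm]
  · simp [hφ.initial]

theorem hasDerivAt_flux_comp (hφ : IsCharacteristicFlow b φ) (hb : ContDiff ℝ 1 ↿b)
    (hβ : ContDiff ℝ 1 ↿β) (hL : ContDiff ℝ 1 ↿L) (hA : ContDiff ℝ 1 ↿A)
    (hbβ : CharacteristicBalance b β b β) (hLA : CharacteristicBalance b β L A)
    (x z ρ t : ℝ) :
    HasDerivAt (fun z => A z t (φ x z ρ t))
      (deriv (fun s => L z s (φ x z ρ s)) t
        + β x t ρ * deriv (fun r => L z t (φ x z r t)) ρ) z := by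
  have hLz : ContDiff ℝ 1 ↿fun s r => L z s r := by fun_prop
  have hLzt : ContDiff ℝ 1 fun r => L z t r := by fun_prop
  have ht : deriv (fun s => L z s (φ x z ρ s)) t
      = deriv (fun s => L z s (φ x z ρ t)) t
        + deriv (fun s => φ x z ρ s) t * deriv (fun r => L z t r) (φ x z ρ t) :=
    (hasDerivAt_comp_graph (hLz.differentiable one_ne_zero _)
      (hφ.differentiableAt_time x z ρ t).hasDerivAt).deriv
  have hρ : deriv (fun r => L z t (φ x z r t)) ρ
      = deriv (fun r => L z t r) (φ x z ρ t) * deriv (fun r => φ x z r t) ρ :=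
    ((hLzt.differentiable one_ne_zero _).hasDerivAt.comp ρ
      (hφ.differentiableAt_initial x z ρ t).hasDerivAt).deriv
  refine (hLA.hasDerivAt_comp hA (hφ.hasDerivAt x z ρ t)).congr_deriv ?_
  rw [ht, hρ, ← hφ.deriv_time_add_mul_deriv_initial hb hβ hbβ]
  ring

theorem deriv_integral_time_add_mul_deriv_integral_initial (hφ : IsCharacteristicFlow b φ)
    (hb : ContDiff ℝ 1 ↿b) (hβ : ContDiff ℝ 1 ↿β) (hL : ContDiff ℝ 1 ↿L) (hA : ContDiff ℝ 1 ↿A)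
    (hbβ : CharacteristicBalance b β b β) (hLA : CharacteristicBalance b β L A)
    (x y t ρ : ℝ) :
    deriv (fun s => ∫ z in x..y, L z s (φ x z ρ s)) t
        + β x t ρ * deriv (fun r => ∫ z in x..y, L z t (φ x z r t)) ρ
      = A y t (φ x y ρ t) - A x t ρ := by
  have hφC := hφ.contDiff
  have hLt : ContDiff ℝ 1 ↿fun s z => L z s (φ x z ρ s) := by fun_prop
  have hLρ : ContDiff ℝ 1 ↿fun r z => L z t (φ x z r t) := by fun_prop
  have hLt' : Continuous fun z => deriv (fun s => L z s (φ x z ρ s)) t :=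
    continuous_deriv_param (by fun_prop) continuous_const
  have hLρ' : Continuous fun z => deriv (fun r => L z t (φ x z r t)) ρ :=
    continuous_deriv_param (by fun_prop) continuous_const
  have hA' (z : ℝ) := hφ.hasDerivAt_flux_comp hb hβ hL hA hbβ hLA x z ρ t
  rw [(hasDerivAt_intervalIntegral_param hLt x y t).deriv,
    (hasDerivAt_intervalIntegral_param hLρ x y ρ).deriv,
    ← intervalIntegral.integral_const_mul, ← intervalIntegral.integral_add
      (hLt'.intervalIntegrable _ _) ((hLρ'.const_mul _).intervalIntegrable _ _),
    intervalIntegral.integral_eq_sub_of_hasDerivAt (fun z _ => hA' z)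
      ((hLt'.add (hLρ'.const_mul _)).intervalIntegrable _ _), hφ.initial]

end IsCharacteristicFlow

end Flow

section Hamiltonian

/-- The equation `b_t + H_x b_ρ - H_ρ b_x = H_ρρ b² + 2 H_ρx b + H_xx` for the slope
`b = dρ/dz` of the characteristics. -/
def SolvesSlopeEquation (H b : ℝ → ℝ → ℝ → ℝ) : Prop :=
  ∀ x t ρ : ℝ,
    deriv (fun s => b x s ρ) t
        + deriv (fun a => H a t ρ) x * deriv (fun r => b x t r) ρ
        - deriv (fun r => H x t r) ρ * deriv (fun z => b z t ρ) x
      = deriv (fun r => deriv (fun r' => H x t r') r) ρ * (b x t ρ) ^ 2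
        + 2 * deriv (fun a => deriv (fun r => H a t r) ρ) x * b x t ρ
        + deriv (fun a => deriv (fun a' => H a' t ρ) a) x

variable {H b : ℝ → ℝ → ℝ → ℝ}

theorem contDiff_deriv_fst (hH : ContDiff ℝ 2 ↿H) :
    ContDiff ℝ 1 ↿fun x t ρ => deriv (fun a => H a t ρ) x :=
  contDiff_deriv_param (m := 2) (F := fun (p : ℝ × ℝ × ℝ) a => H a p.2.1 p.2.2)
    (by fun_prop) contDiff_fst (by norm_num)

theorem contDiff_deriv_thd (hH : ContDiff ℝ 2 ↿H) :
    ContDiff ℝ 1 ↿fun x t ρ => deriv (fun r => H x t r) ρ :=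
  contDiff_deriv_param (m := 2) (F := fun (p : ℝ × ℝ × ℝ) r => H p.1 p.2.1 r)
    (by fun_prop) (by fun_prop : ContDiff ℝ 1 fun p : ℝ × ℝ × ℝ => p.2.2) (by norm_num)

theorem contDiff_betaF (hH : ContDiff ℝ 2 ↿H) (hb : ContDiff ℝ 1 ↿b) :
    ContDiff ℝ 1 ↿(betaF H b) :=
  (contDiff_deriv_fst hH).add (hb.mul (contDiff_deriv_thd hH))

theorem hasDerivAt_deriv_fst_thd (hH : ContDiff ℝ 2 ↿H) (x t ρ : ℝ) :
    HasDerivAt (fun r => deriv (fun a => H a t r) x)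
      (deriv (fun a => deriv (fun r => H a t r) ρ) x) ρ := by
  have hHρ : ContDiff ℝ 1 ↿fun a r => deriv (fun r' => H a t r') r :=
    (contDiff_deriv_thd hH).comp (by fun_prop : ContDiff ℝ 1 fun q : ℝ × ℝ => (q.1, t, q.2))
  have hHxt (x : ℝ) : ContDiff ℝ 2 fun r => H x t r := by fun_prop
  have hHtρ : ContDiff ℝ 2 fun a => H a t ρ := by fun_prop
  exact hasDerivAt_deriv_of_hasDerivAt hHρ
    (fun x ρ => ((hHxt x).differentiable two_ne_zero ρ).hasDerivAt)
    (hHtρ.differentiable two_ne_zero x)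

theorem SolvesSlopeEquation.characteristicBalance (hHb : SolvesSlopeEquation H b)
    (hH : ContDiff ℝ 2 ↿H) (hb : ContDiff ℝ 1 ↿b) :
    CharacteristicBalance b (betaF H b) b (betaF H b) := by
  intro x t ρ
  have hbx : ContDiff ℝ 1 fun z => b z t ρ := by fun_prop
  have hbρ : ContDiff ℝ 1 fun r => b x t r := by fun_prop
  have hHxx : ContDiff ℝ 1 fun z => deriv (fun a => H a t ρ) z :=
    (contDiff_deriv_fst hH).comp (by fun_prop : ContDiff ℝ 1 fun z : ℝ => (z, t, ρ))
  have hHρx : ContDiff ℝ 1 fun z => deriv (fun r => H z t r) ρ :=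
    (contDiff_deriv_thd hH).comp (by fun_prop : ContDiff ℝ 1 fun z : ℝ => (z, t, ρ))
  have hHρρ : ContDiff ℝ 1 fun r => deriv (fun r' => H x t r') r :=
    (contDiff_deriv_thd hH).comp (by fun_prop : ContDiff ℝ 1 fun r : ℝ => (x, t, r))
  have hβx : deriv (fun z => betaF H b z t ρ) x = _ :=
    ((hHxx.differentiable one_ne_zero x).hasDerivAt.add
      ((hbx.differentiable one_ne_zero x).hasDerivAt.mul
        (hHρx.differentiable one_ne_zero x).hasDerivAt)).deriv
  have hβρ : deriv (fun r => betaF H b x t r) ρ = _ :=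
    ((hasDerivAt_deriv_fst_thd hH x t ρ).add
      ((hbρ.differentiable one_ne_zero ρ).hasDerivAt.mul
        (hHρρ.differentiable one_ne_zero ρ).hasDerivAt)).deriv
  rw [hβx, hβρ, betaF]
  linear_combination hHb x t ρ

theorem vel_eq_integral {x t : ℝ} (hH : ContDiff ℝ 1 (H x t)) (a c : ℝ) :
    vel H x t a c = ∫ s in (0 : ℝ)..1, deriv (H x t) (a + s * (c - a)) := by
  have hcont : Continuous fun s => deriv (H x t) (a + s * (c - a)) :=
    hH.continuous_deriv_one.comp (by fun_prop)
  have hFTC : (c - a) * ∫ s in (0 : ℝ)..1, deriv (H x t) (a + s * (c - a))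
      = H x t (a + (c - a)) - H x t a :=
    intervalIntegral.integral_unitInterval_deriv_eq_sub hcont.continuousOn
      fun s _ => (hH.differentiable one_ne_zero _).hasDerivAt
  rw [add_sub_cancel] at hFTC
  unfold vel
  split_ifs with hac
  · simp [hac]
  · rw [div_eq_iff (sub_ne_zero.2 hac)]
    linear_combination hFTC

theorem contDiff_vel (hH : ContDiff ℝ 2 ↿H) : ContDiff ℝ 1 ↿(vel H) := by
  have hvel : ↿(vel H) = fun p : ℝ × ℝ × ℝ × ℝ => ∫ s in (0 : ℝ)..1,
      deriv (fun r => H p.1 p.2.1 r) (p.2.2.1 + s * (p.2.2.2 - p.2.2.1)) :=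
    funext fun p => vel_eq_integral ((by fun_prop : ContDiff ℝ 2 (H p.1 p.2.1)).of_le one_le_two)
      p.2.2.1 p.2.2.2
  rw [hvel]
  refine contDiff_one_intervalIntegral_param (F := fun (p : ℝ × ℝ × ℝ × ℝ) s =>
    deriv (fun r => H p.1 p.2.1 r) (p.2.2.1 + s * (p.2.2.2 - p.2.2.1))) ?_ 0 1
  exact (contDiff_deriv_thd hH).comp (by fun_prop : ContDiff ℝ 1
    fun q : (ℝ × ℝ × ℝ × ℝ) × ℝ =>
      (q.1.1, q.1.2.1, q.1.2.2.1 + q.2 * (q.1.2.2.2 - q.1.2.2.1)))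

end Hamiltonian

section Kernels

/-- The kernel `f(x, t, ρ₋, ρ₊)` vanishes unless `Pm < ρ₋ < ρ₊ < Pp`. The inequalities are strict:
for a continuous kernel this is the same as vanishing outside the closed triangle. -/
def SupportedInTriangle (Pm Pp : ℝ) (f : ℝ → ℝ → ℝ → ℝ → ℝ) : Prop :=
  ∀ ⦃x t rm rp⦄, f x t rm rp ≠ 0 → Pm < rm ∧ rm < rp ∧ rp < Pp

/-- The flux kernel `v f`, whose zeroth moment is the flux moment `A`. -/
noncomputable def fluxKernel (H : ℝ → ℝ → ℝ → ℝ) (f : ℝ → ℝ → ℝ → ℝ → ℝ)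
    (x t rm rp : ℝ) : ℝ :=
  vel H x t rm rp * f x t rm rp

variable {H b : ℝ → ℝ → ℝ → ℝ} {f g : ℝ → ℝ → ℝ → ℝ → ℝ} {Pm Pp : ℝ}

theorem support_subset_Ioo_of_subset_Icc {g : ℝ → ℝ} {a c : ℝ} (hg : Continuous g)
    (h : Function.support g ⊆ Icc a c) : Function.support g ⊆ Ioo a c :=
  interior_Icc (a := a) (b := c) ▸ hg.isOpen_support.subset_interior_iff.2 h

theorem supportedInTriangle_of_continuous (hf : Continuous ↿f)
    (hsupp : ∀ x t rm rp, ¬ (Pm ≤ rm ∧ rm ≤ rp ∧ rp ≤ Pp) → f x t rm rp = 0) :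
    SupportedInTriangle Pm Pp f := by
  intro x t rm rp h
  have hmem {rm rp : ℝ} (h : f x t rm rp ≠ 0) : Pm ≤ rm ∧ rm ≤ rp ∧ rp ≤ Pp :=
    of_not_not (mt (hsupp x t rm rp) h)
  have hrm : rm ∈ Ioo Pm rp :=
    support_subset_Ioo_of_subset_Icc (g := fun rm => f x t rm rp) (by fun_prop)
      (fun _ h => ⟨(hmem h).1, (hmem h).2.1⟩) h
  have hrp : rp ∈ Ioo rm Pp :=
    support_subset_Ioo_of_subset_Icc (g := f x t rm) (by fun_prop) (fun _ h => (hmem h).2) h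
  exact ⟨hrm.1, hrm.2, hrp.2⟩

theorem setIntegral_eq_intervalIntegral_of_support_subset {g : ℝ → ℝ} {s : Set ℝ} {a c : ℝ}
    (hs : Function.support g ⊆ s) (hac : Function.support g ⊆ Ioc a c) :
    ∫ r in s, g r = ∫ r in a..c, g r := by
  rw [intervalIntegral.integral_eq_integral_of_support_subset hac]
  exact setIntegral_eq_integral_of_forall_compl_eq_zero fun r hr =>
    Function.notMem_support.1 fun h => hr (hs h)

theorem AF_eq_lamF_fluxKernel (H : ℝ → ℝ → ℝ → ℝ) (f : ℝ → ℝ → ℝ → ℝ → ℝ) :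
    AF H f = lamF (fluxKernel H f) :=
  rfl

theorem contDiff_fluxKernel (hH : ContDiff ℝ 2 ↿H) (hf : ContDiff ℝ 1 ↿f) :
    ContDiff ℝ 1 ↿(fluxKernel H f) :=
  (contDiff_vel hH).mul hf

namespace SupportedInTriangle

theorem flux (hf : SupportedInTriangle Pm Pp f) (H : ℝ → ℝ → ℝ → ℝ) :
    SupportedInTriangle Pm Pp (fluxKernel H f) :=
  fun _ _ _ _ h => hf (right_ne_zero_of_mul h)

theorem lamF_eq_intervalIntegral (hg : SupportedInTriangle Pm Pp g) (x t ρ : ℝ) :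
    lamF g x t ρ = ∫ r in Pm..Pp, g x t ρ r :=
  setIntegral_eq_intervalIntegral_of_support_subset (fun _ h => (hg h).2.1)
    fun _ h => ⟨(hg h).1.trans (hg h).2.1, (hg h).2.2.le⟩

theorem contDiff_lamF (hg : SupportedInTriangle Pm Pp g) (hgC : ContDiff ℝ 1 ↿g) :
    ContDiff ℝ 1 ↿(lamF g) := by
  have hlam : ↿(lamF g) = fun p : ℝ × ℝ × ℝ => ∫ r in Pm..Pp, g p.1 p.2.1 p.2.2 r :=
    funext fun p => hg.lamF_eq_intervalIntegral p.1 p.2.1 p.2.2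
  rw [hlam]
  exact contDiff_one_intervalIntegral_param (by fun_prop) Pm Pp

theorem contDiff_AF (hf : SupportedInTriangle Pm Pp f) (hH : ContDiff ℝ 2 ↿H)
    (hfC : ContDiff ℝ 1 ↿f) : ContDiff ℝ 1 ↿(AF H f) :=
  (hf.flux H).contDiff_lamF (contDiff_fluxKernel hH hfC)

theorem deriv_lamF_fst (hg : SupportedInTriangle Pm Pp g) (hgC : ContDiff ℝ 1 ↿g) (x t ρ : ℝ) :
    deriv (fun z => lamF g z t ρ) x = ∫ r in Pm..Pp, deriv (fun z => g z t ρ r) x := by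
  simp only [hg.lamF_eq_intervalIntegral]
  exact (hasDerivAt_intervalIntegral_param (G := fun z r => g z t ρ r)
    (by fun_prop) Pm Pp x).deriv

theorem deriv_lamF_snd (hg : SupportedInTriangle Pm Pp g) (hgC : ContDiff ℝ 1 ↿g) (x t ρ : ℝ) :
    deriv (fun s => lamF g x s ρ) t = ∫ r in Pm..Pp, deriv (fun s => g x s ρ r) t := by
  simp only [hg.lamF_eq_intervalIntegral]
  exact (hasDerivAt_intervalIntegral_param (G := fun s r => g x s ρ r)
    (by fun_prop) Pm Pp t).deriv

theorem deriv_lamF_thd (hg : SupportedInTriangle Pm Pp g) (hgC : ContDiff ℝ 1 ↿g) (x t ρ : ℝ) :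
    deriv (fun r' => lamF g x t r') ρ = ∫ r in Pm..Pp, deriv (fun r' => g x t r' r) ρ := by
  simp only [hg.lamF_eq_intervalIntegral]
  exact (hasDerivAt_intervalIntegral_param (G := fun r' r => g x t r' r)
    (by fun_prop) Pm Pp ρ).deriv

end SupportedInTriangle

end Kernels

section KineticBalance

variable {H b : ℝ → ℝ → ℝ → ℝ} {f : ℝ → ℝ → ℝ → ℝ → ℝ} {Pm Pp : ℝ}

theorem intervalIntegral_intervalIntegral_mul_swap {u : ℝ → ℝ} {g : ℝ → ℝ → ℝ}
    (hu : Continuous u) (hg : Continuous ↿g) (a c a' c' : ℝ) :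
    ∫ r in a..c, ∫ s in a'..c', u s * g s r = ∫ s in a'..c', u s * ∫ r in a..c, g s r := by
  have hc : Continuous (Function.uncurry fun r s => u s * g s r) := by
    simp only [Function.uncurry_def]
    fun_prop
  rw [intervalIntegral_intervalIntegral_swap]
  · simp only [intervalIntegral.integral_const_mul]
  · exact (hc.continuousOn.integrableOn_compact (isCompact_uIcc.prod isCompact_uIcc)).mono_set
      (prod_mono uIoc_subset_uIcc uIoc_subset_uIcc)

theorem contDiff_KF_mul (hH : ContDiff ℝ 2 ↿H) (hb : ContDiff ℝ 1 ↿b)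
    (hfC : ContDiff ℝ 1 ↿f) (x t ρ : ℝ) :
    ContDiff ℝ 1 fun r => KF H b x t r ρ * f x t ρ r := by
  have hv := contDiff_vel hH
  have hβ := contDiff_betaF hH hb
  unfold KF
  fun_prop

theorem continuous_deriv_thd (hf : ContDiff ℝ 1 ↿f) (x t ρ : ℝ) :
    Continuous fun r => deriv (fun r' => f x t r' r) ρ :=
  continuous_deriv_param (by fun_prop) continuous_const

theorem continuous_CminusF (hH : ContDiff ℝ 2 ↿H) (hfC : ContDiff ℝ 1 ↿f) (x t ρ : ℝ) :
    Continuous (CminusF H b f x t ρ) := by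
  have hhρ := continuous_deriv_thd (contDiff_fluxKernel hH hfC) x t ρ
  have hfρ := continuous_deriv_thd hfC x t ρ
  exact (hhρ.const_mul _).sub (hfρ.const_mul _)

namespace SupportedInTriangle

theorem QplusF_eq_intervalIntegral (hf : SupportedInTriangle Pm Pp f)
    (H : ℝ → ℝ → ℝ → ℝ) (x t rm rp : ℝ) :
    QplusF H f x t rm rp = ∫ rs in Pm..Pp,
      (f x t rm rs * fluxKernel H f x t rs rp - fluxKernel H f x t rm rs * f x t rs rp) := by
  have hsupp {rs : ℝ} (h : (vel H x t rs rp - vel H x t rm rs) * f x t rm rs * f x t rs rp ≠ 0) :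
      rs ∈ Ioo rm rp ∧ rs ∈ Ioc Pm Pp :=
    have hl := hf (right_ne_zero_of_mul (left_ne_zero_of_mul h))
    have hr := hf (right_ne_zero_of_mul h)
    ⟨⟨hl.2.1, hr.2.1⟩, hr.1, hl.2.2.le⟩
  rw [QplusF, setIntegral_eq_intervalIntegral_of_support_subset (fun _ h => (hsupp h).1)
    (fun _ h => (hsupp h).2)]
  congr 1 with rs
  simp only [fluxKernel]
  ring

theorem continuous_QplusF (hf : SupportedInTriangle Pm Pp f) (hH : ContDiff ℝ 2 ↿H)
    (hfC : ContDiff ℝ 1 ↿f) (x t ρ : ℝ) : Continuous (QplusF H f x t ρ) := by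
  have hf' := hfC.continuous
  have hh := (contDiff_fluxKernel hH hfC).continuous
  rw [funext (hf.QplusF_eq_intervalIntegral H x t ρ)]
  exact intervalIntegral.continuous_parametric_intervalIntegral_of_continuous' (by fun_prop) Pm Pp

theorem integral_QplusF (hf : SupportedInTriangle Pm Pp f) (hH : ContDiff ℝ 2 ↿H)
    (hfC : ContDiff ℝ 1 ↿f) (x t ρ : ℝ) :
    ∫ r in Pm..Pp, QplusF H f x t ρ r = ∫ s in Pm..Pp,
      (f x t ρ s * AF H f x t s - fluxKernel H f x t ρ s * lamF f x t s) := by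
  have hf' := hfC.continuous
  have hh := (contDiff_fluxKernel hH hfC).continuous
  have hlam := (hf.contDiff_lamF hfC).continuous
  have hA := (hf.contDiff_AF hH hfC).continuous
  have hgain : Continuous fun r =>
      ∫ s in Pm..Pp, f x t ρ s * fluxKernel H f x t s r :=
    intervalIntegral.continuous_parametric_intervalIntegral_of_continuous' (by fun_prop) Pm Pp
  have hloss : Continuous fun r =>
      ∫ s in Pm..Pp, fluxKernel H f x t ρ s * f x t s r :=
    intervalIntegral.continuous_parametric_intervalIntegral_of_continuous' (by fun_prop) Pm Pp
  have hsplit (r : ℝ) : QplusF H f x t ρ r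
      = (∫ s in Pm..Pp, f x t ρ s * fluxKernel H f x t s r)
        - ∫ s in Pm..Pp, fluxKernel H f x t ρ s * f x t s r := by
    rw [hf.QplusF_eq_intervalIntegral, intervalIntegral.integral_sub] <;>
      exact Continuous.intervalIntegrable (by fun_prop) _ _
  simp only [hsplit]
  rw [intervalIntegral.integral_sub (hgain.intervalIntegrable _ _) (hloss.intervalIntegrable _ _),
    intervalIntegral_intervalIntegral_mul_swap (u := f x t ρ) (g := fluxKernel H f x t)
      (by fun_prop) (by fun_prop),
    intervalIntegral_intervalIntegral_mul_swap (u := fluxKernel H f x t ρ) (g := f x t)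
      (by fun_prop) (by fun_prop), intervalIntegral.integral_sub]
  · simp only [AF_eq_lamF_fluxKernel, hf.lamF_eq_intervalIntegral,
      (hf.flux H).lamF_eq_intervalIntegral]
  · exact Continuous.intervalIntegrable (by fun_prop) _ _
  · exact Continuous.intervalIntegrable (by fun_prop) _ _

theorem integral_mul_JF (hf : SupportedInTriangle Pm Pp f) (hH : ContDiff ℝ 2 ↿H)
    (hfC : ContDiff ℝ 1 ↿f) (x t ρ : ℝ) :
    ∫ r in Pm..Pp, f x t ρ r * JF H f x t ρ r = ∫ s in Pm..Pp,
      (f x t ρ s * AF H f x t s - fluxKernel H f x t ρ s * lamF f x t s) := by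
  have hf' := hfC.continuous
  have hh := (contDiff_fluxKernel hH hfC).continuous
  have hlam := (hf.contDiff_lamF hfC).continuous
  have hA := (hf.contDiff_AF hH hfC).continuous
  have hsplit (r : ℝ) : f x t ρ r * JF H f x t ρ r
      = (f x t ρ r * AF H f x t r - fluxKernel H f x t ρ r * lamF f x t r)
        - (AF H f x t ρ * f x t ρ r - lamF f x t ρ * fluxKernel H f x t ρ r) := by
    simp only [JF, fluxKernel]
    ring
  have hcancel :
      ∫ r in Pm..Pp, (AF H f x t ρ * f x t ρ r - lamF f x t ρ * fluxKernel H f x t ρ r) = 0 := by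
    rw [intervalIntegral.integral_sub, intervalIntegral.integral_const_mul,
      intervalIntegral.integral_const_mul, ← hf.lamF_eq_intervalIntegral,
      ← (hf.flux H).lamF_eq_intervalIntegral, AF_eq_lamF_fluxKernel, mul_comm, sub_self] <;>
      exact Continuous.intervalIntegrable (by fun_prop) _ _
  simp only [hsplit]
  rw [intervalIntegral.integral_sub, hcancel, sub_zero] <;>
    exact Continuous.intervalIntegrable (by fun_prop) _ _

theorem integral_CplusF (hf : SupportedInTriangle Pm Pp f) (hH : ContDiff ℝ 2 ↿H)
    (hb : ContDiff ℝ 1 ↿b) (hfC : ContDiff ℝ 1 ↿f) (x t ρ : ℝ) :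
    ∫ r in Pm..Pp, CplusF H b f x t ρ r = 0 := by
  have hPm : f x t ρ Pm = 0 := of_not_not fun h => ((hf h).1.trans (hf h).2.1).false
  have hPp : f x t ρ Pp = 0 := of_not_not fun h => (hf h).2.2.false
  have hFTC := intervalIntegral.integral_deriv_of_contDiffOn_uIcc
    (contDiff_KF_mul hH hb hfC x t ρ).contDiffOn (a := Pm) (b := Pp)
  simpa only [CplusF, hPm, hPp, mul_zero, sub_zero] using hFTC

theorem integral_CminusF (hf : SupportedInTriangle Pm Pp f) (hH : ContDiff ℝ 2 ↿H)
    (hfC : ContDiff ℝ 1 ↿f) (x t ρ : ℝ) :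
    ∫ r in Pm..Pp, CminusF H b f x t ρ r
      = b x t ρ * deriv (fun r => AF H f x t r) ρ
        - betaF H b x t ρ * deriv (fun r => lamF f x t r) ρ := by
  have hh := contDiff_fluxKernel hH hfC
  have hhρ := continuous_deriv_thd hh x t ρ
  have hfρ := continuous_deriv_thd hfC x t ρ
  rw [AF_eq_lamF_fluxKernel, (hf.flux H).deriv_lamF_thd hh, hf.deriv_lamF_thd hfC,
    ← intervalIntegral.integral_const_mul, ← intervalIntegral.integral_const_mul,
    ← intervalIntegral.integral_sub ((hhρ.const_mul _).intervalIntegrable _ _)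
      ((hfρ.const_mul _).intervalIntegrable _ _)]
  rfl

theorem integral_QplusF_sub_mul_JF (hf : SupportedInTriangle Pm Pp f) (hH : ContDiff ℝ 2 ↿H)
    (hfC : ContDiff ℝ 1 ↿f) (x t ρ : ℝ) :
    ∫ r in Pm..Pp, (QplusF H f x t ρ r - f x t ρ r * JF H f x t ρ r) = 0 := by
  have hf' := hfC.continuous
  have hv := (contDiff_vel hH).continuous
  have hlam := (hf.contDiff_lamF hfC).continuous
  have hA := (hf.contDiff_AF hH hfC).continuous
  have hQ := hf.continuous_QplusF hH hfC x t ρ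
  have hJ : Continuous fun r => f x t ρ r * JF H f x t ρ r := by
    unfold JF
    fun_prop
  rw [intervalIntegral.integral_sub (hQ.intervalIntegrable _ _) (hJ.intervalIntegrable _ _),
    hf.integral_QplusF hH hfC, hf.integral_mul_JF hH hfC, sub_self]

theorem integral_transport (hf : SupportedInTriangle Pm Pp f) (hH : ContDiff ℝ 2 ↿H)
    (hb : ContDiff ℝ 1 ↿b) (hfC : ContDiff ℝ 1 ↿f) (x t ρ : ℝ) :
    ∫ r in Pm..Pp, (deriv (fun s => f x s ρ r) t - deriv (fun z => fluxKernel H f z t ρ r) x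
        - CplusF H b f x t ρ r - CminusF H b f x t ρ r)
      = deriv (fun s => lamF f x s ρ) t - deriv (fun z => AF H f z t ρ) x
        - (b x t ρ * deriv (fun r => AF H f x t r) ρ
          - betaF H b x t ρ * deriv (fun r => lamF f x t r) ρ) := by
  have hh := contDiff_fluxKernel hH hfC
  have hft : Continuous fun r => deriv (fun s => f x s ρ r) t :=
    continuous_deriv_param (by fun_prop) continuous_const
  have hhx : Continuous fun r => deriv (fun z => fluxKernel H f z t ρ r) x :=
    continuous_deriv_param (by fun_prop) continuous_const
  have hCp : Continuous (CplusF H b f x t ρ) :=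
    (contDiff_KF_mul hH hb hfC x t ρ).continuous_deriv_one
  have hCm : Continuous (CminusF H b f x t ρ) := continuous_CminusF hH hfC x t ρ
  rw [intervalIntegral.integral_sub, intervalIntegral.integral_sub, intervalIntegral.integral_sub,
    hf.integral_CplusF hH hb hfC, hf.integral_CminusF hH hfC, sub_zero, ← hf.deriv_lamF_snd hfC,
    ← (hf.flux H).deriv_lamF_fst hh, ← AF_eq_lamF_fluxKernel] <;>
    exact Continuous.intervalIntegrable (by fun_prop) _ _

theorem characteristicBalance (hf : SupportedInTriangle Pm Pp f) (hH : ContDiff ℝ 2 ↿H)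
    (hb : ContDiff ℝ 1 ↿b) (hfC : ContDiff ℝ 1 ↿f) (hkin : SolvesKineticF H b f) :
    CharacteristicBalance b (betaF H b) (lamF f) (AF H f) := by
  intro x t ρ
  have hzero := (hf.integral_transport hH hb hfC x t ρ).symm.trans
    ((intervalIntegral.integral_congr fun r _ => hkin x t ρ r).trans
      (hf.integral_QplusF_sub_mul_JF hH hfC x t ρ))
  linarith

end SupportedInTriangle

end KineticBalance

theorem stmt7_general
    (H b : ℝ → ℝ → ℝ → ℝ) (f φ : ℝ → ℝ → ℝ → ℝ → ℝ) (Pm Pp : ℝ)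
    (hH : ContDiff ℝ 2 ↿H) (hb : ContDiff ℝ 1 ↿b) (hHb : SolvesSlopeEquation H b)
    (hf : ContDiff ℝ 1 ↿f)
    (hf_supp : ∀ x t rm rp, ¬ (Pm ≤ rm ∧ rm ≤ rp ∧ rp ≤ Pp) → f x t rm rp = 0)
    (hf_kin : SolvesKineticF H b f) (hφ : IsCharacteristicFlow b φ) (x y t ρ : ℝ) :
    deriv (fun s => GammaK f φ x y s ρ) t
        + betaF H b x t ρ * deriv (fun r => GammaK f φ x y t r) ρ
      = AF H f y t (φ x y ρ t) - AF H f x t ρ := by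
  have hsupp : SupportedInTriangle Pm Pp f :=
    supportedInTriangle_of_continuous hf.continuous hf_supp
  have hcomm : CharacteristicBalance b (betaF H b) b (betaF H b) :=
    hHb.characteristicBalance hH hb
  have hbalance : CharacteristicBalance b (betaF H b) (lamF f) (AF H f) :=
    hsupp.characteristicBalance hH hb hf hf_kin
  exact hφ.deriv_integral_time_add_mul_deriv_integral_initial hb (contDiff_betaF hH hb)
    (hsupp.contDiff_lamF hf) (hsupp.contDiff_AF hH hf) hcomm hbalance x y t ρ

/-- Lemma (2.10): `Γ_t + β Γ_ρ = A(y,t,φ_x^y(ρ;t)) − A(x,t,ρ)`. -/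
theorem stmt7
    (H b : ℝ → ℝ → ℝ → ℝ) (f φ : ℝ → ℝ → ℝ → ℝ → ℝ) (Pm Pp : ℝ)
    (hH : ContDiff ℝ 2 (fun p : ℝ × ℝ × ℝ => H p.1 p.2.1 p.2.2))
    (hb : ContDiff ℝ 1 (fun p : ℝ × ℝ × ℝ => b p.1 p.2.1 p.2.2))
    (hb_bdd : ∃ M : ℝ, ∀ x t ρ, |b x t ρ| ≤ M)
    (hb_PDE : ∀ x t ρ : ℝ,
      deriv (fun s => b x s ρ) t
          + deriv (fun a => H a t ρ) x * deriv (fun r => b x t r) ρ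
          - deriv (fun r => H x t r) ρ * deriv (fun z => b z t ρ) x
        = deriv (fun r => deriv (fun r' => H x t r') r) ρ * (b x t ρ) ^ 2
          + 2 * deriv (fun a => deriv (fun r => H a t r) ρ) x * b x t ρ
          + deriv (fun a => deriv (fun a' => H a' t ρ) a) x)
    (hf_C1 : ContDiff ℝ 1 (fun p : ℝ × ℝ × ℝ × ℝ => f p.1 p.2.1 p.2.2.1 p.2.2.2))
    (hf_nonneg : ∀ x t rm rp, 0 ≤ f x t rm rp)
    (hf_supp : ∀ x t rm rp, ¬ (Pm ≤ rm ∧ rm ≤ rp ∧ rp ≤ Pp) → f x t rm rp = 0)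
    (hf_kin : SolvesKineticF H b f)
    (hφ_init : ∀ x ρ t, φ x x ρ t = ρ)
    (hφ_ode : ∀ x z ρ t, HasDerivAt (fun w => φ x w ρ t) (b z t (φ x z ρ t)) z)
    (hφ_C1 : ContDiff ℝ 1 (fun p : ℝ × ℝ × ℝ × ℝ => φ p.1 p.2.1 p.2.2.1 p.2.2.2)) :
    ∀ x y t ρ : ℝ, x ≤ y →
      deriv (fun s => GammaK f φ x y s ρ) t
          + betaF H b x t ρ * deriv (fun r => GammaK f φ x y t r) ρ
        = AF H f y t (φ x y ρ t) - AF H f x t ρ := by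
  intro x y t ρ _
  exact stmt7_general H b f φ Pm Pp hH hb hb_PDE hf_C1 hf_supp hf_kin
    ⟨hφ_init, hφ_ode, hφ_C1⟩ x y t ρ
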